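/- Let K ∈ ℝ, N > 1, a < 0 < b, and let h : (a,b) → (0,∞) be a function such that h^{1/(N−1)} is σ_{K/(N−1)}-concave on (a,b). Set H := d⁺(log h)(0). Then h(r)/h(0) ≤ J_{H,K,N}(r) for all r ∈ (0,b). -/

import Mathlib

open Real Set Filter MeasureTheory Topology

/-- Generalized sine: the solution of `v'' + κ v = 0`, `v 0 = 0`, `v' 0 = 1`. -/
noncomputable def sinK (κ r : ℝ) : ℝ :=
  if 0 < κ then Real.sin (Real.sqrt κ * r) / Real.sqrt κ
  else if κ = 0 then r
  else Real.sinh (Real.sqrt (-κ) * r) / Real.sqrt (-κ)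

/-- Generalized cosine: the solution of `v'' + κ v = 0`, `v 0 = 1`, `v' 0 = 0`. -/
noncomputable def cosK (κ r : ℝ) : ℝ :=
  if 0 < κ then Real.cos (Real.sqrt κ * r)
  else if κ = 0 then 1
  else Real.cosh (Real.sqrt (-κ) * r)

/-- Distortion coefficient `σ_κ^{(t)}(θ)` (for `θ < π_κ`; `σ_κ^{(t)}(0) = t`). -/
noncomputable def sigmaCoeff (κ t θ : ℝ) : ℝ :=
  if θ = 0 then t else sinK κ (t * θ) / sinK κ θ

/-- `u` is `σ_κ`-concave on `I ⊆ ℝ`.  The requirement `θ := |r₁ - r₀| < π_κ`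
(encoded by `κ ≤ 0 ∨ |r₁ - r₀| < π/√κ`) expresses that the inequality with the
value `σ_κ^{(t)}(θ) = ∞` for `θ ≥ π_κ` cannot hold for a positive function. -/
def IsSigmaConcaveOn (κ : ℝ) (I : Set ℝ) (u : ℝ → ℝ) : Prop :=
  ∀ r₀ ∈ I, ∀ r₁ ∈ I,
    (r₀ ≠ r₁ → (κ ≤ 0 ∨ |r₁ - r₀| < Real.pi / Real.sqrt κ)) ∧
    ∀ t ∈ Set.Icc (0:ℝ) 1,
      sigmaCoeff κ (1 - t) |r₁ - r₀| * u r₀ + sigmaCoeff κ t |r₁ - r₀| * u r₁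
        ≤ u ((1 - t) * r₀ + t * r₁)

/-- Right derivative `d⁺u(r) = L`, i.e. `(u (r+h) - u r)/h → L` as `h ↓ 0`. -/
def HasRightDerivAt (u : ℝ → ℝ) (r L : ℝ) : Prop :=
  Filter.Tendsto (fun h : ℝ => (u (r + h) - u r) / h) (nhdsWithin 0 (Set.Ioi 0)) (nhds L)

/-- Left derivative `d⁻u(r) = L`, i.e. `(u (r-h) - u r)/(-h) → L` as `h ↓ 0`. -/
def HasLeftDerivAt (u : ℝ → ℝ) (r L : ℝ) : Prop :=
  Filter.Tendsto (fun h : ℝ => (u (r - h) - u r) / (-h)) (nhdsWithin 0 (Set.Ioi 0)) (nhds L)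

/-- The Jacobian function `J_{H,K,N}(r) = (cos_{K/(N-1)}(r) + H/(N-1) sin_{K/(N-1)}(r))₊^{N-1}`. -/
noncomputable def Jac (H K N r : ℝ) : ℝ :=
  (max (cosK (K/(N-1)) r + (H/(N-1)) * sinK (K/(N-1)) r) 0) ^ (N-1)

/-!
Put `κ = K / (N - 1)` and `u = h ^ (1 / (N - 1))`. Evaluated between the fixed endpoints `r₀ < r₁`,
`σ_κ`-concavity says that `u` lies above the solution of `v'' + κ v = 0` with the same boundary
values. The two agree at `r₀`, so the right derivative of `u` there is at least that of `v`; solving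
this inequality for `u r₁` gives `u r₁ ≤ u r₀ * cos_κ (r₁ - r₀) + d⁺u(r₀) * sin_κ (r₁ - r₀)`, and
`d⁺u(r₀) = u r₀ * d⁺(log h)(r₀) / (N - 1)`.
-/

theorem sinK_zero (κ : ℝ) : sinK κ 0 = 0 := by
  unfold sinK
  split_ifs <;> simp

theorem cosK_zero (κ : ℝ) : cosK κ 0 = 1 := by
  unfold cosK
  split_ifs <;> simp

theorem hasDerivAt_sinK (κ r : ℝ) : HasDerivAt (sinK κ) (cosK κ r) r := by
  have hasDerivAt_mul (c : ℝ) : HasDerivAt (fun x => c * x) c r := by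
    simpa using (hasDerivAt_id r).const_mul c
  unfold sinK cosK
  split_ifs with hκ_pos hκ_zero
  · have hsqrt : √κ ≠ 0 := (sqrt_pos.2 hκ_pos).ne'
    simpa [hsqrt] using (hasDerivAt_mul √κ).sin.div_const √κ
  · exact hasDerivAt_id r
  · have hsqrt : √(-κ) ≠ 0 := (sqrt_pos.2 (by grind)).ne'
    simpa [hsqrt] using (hasDerivAt_mul √(-κ)).sinh.div_const √(-κ)

theorem sinK_pos {κ r : ℝ} (hr : 0 < r) (hrπ : κ ≤ 0 ∨ r < π / √κ) : 0 < sinK κ r := by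
  unfold sinK
  split_ifs with hκ_pos hκ_zero
  · have hsqrt : 0 < √κ := sqrt_pos.2 hκ_pos
    have hlt : √κ * r < π := (lt_div_iff₀' hsqrt).1 (hrπ.resolve_left hκ_pos.not_ge)
    exact div_pos (sin_pos_of_pos_of_lt_pi (mul_pos hsqrt hr) hlt) hsqrt
  · exact hr
  · have hsqrt : 0 < √(-κ) := sqrt_pos.2 (by grind)
    exact div_pos (sinh_pos_iff.2 (mul_pos hsqrt hr)) hsqrt

theorem sigmaCoeff_div {θ : ℝ} (hθ : θ ≠ 0) (κ s : ℝ) :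
    sigmaCoeff κ (s / θ) θ = sinK κ s / sinK κ θ := by
  rw [sigmaCoeff, if_neg hθ, div_mul_cancel₀ s hθ]

namespace IsSigmaConcaveOn

variable {κ r₀ r₁ : ℝ} {I : Set ℝ} {u : ℝ → ℝ}

theorem sinK_sub_pos (hu : IsSigmaConcaveOn κ I u) (h₀ : r₀ ∈ I) (h₁ : r₁ ∈ I) (hlt : r₀ < r₁) :
    0 < sinK κ (r₁ - r₀) := by
  have hdiam := (hu r₀ h₀ r₁ h₁).1 hlt.ne
  rw [abs_of_pos (sub_pos.2 hlt)] at hdiam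
  exact sinK_pos (sub_pos.2 hlt) hdiam

theorem sinK_interpolation_le (hu : IsSigmaConcaveOn κ I u) (h₀ : r₀ ∈ I) (h₁ : r₁ ∈ I)
    (hlt : r₀ < r₁) {x : ℝ} (hx : x ∈ Icc r₀ r₁) :
    sinK κ (r₁ - x) * u r₀ + sinK κ (x - r₀) * u r₁ ≤ sinK κ (r₁ - r₀) * u x := by
  have hθ : 0 < r₁ - r₀ := sub_pos.2 hlt
  have ht : (x - r₀) / (r₁ - r₀) ∈ Icc (0 : ℝ) 1 :=
    ⟨div_nonneg (sub_nonneg.2 hx.1) hθ.le, (div_le_one hθ).2 (by linarith [hx.2])⟩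
  have hcompl : 1 - (x - r₀) / (r₁ - r₀) = (r₁ - x) / (r₁ - r₀) := by field
  have hpoint : (r₁ - x) / (r₁ - r₀) * r₀ + (x - r₀) / (r₁ - r₀) * r₁ = x := by field
  have hconc := (hu r₀ h₀ r₁ h₁).2 _ ht
  rw [abs_of_pos hθ, hcompl, hpoint, sigmaCoeff_div hθ.ne', sigmaCoeff_div hθ.ne',
    div_mul_eq_mul_div, div_mul_eq_mul_div, ← add_div,
    div_le_iff₀' (hu.sinK_sub_pos h₀ h₁ hlt)] at hconc
  exact hconc

end IsSigmaConcaveOn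

theorem hasDerivWithinAt_Ioi_le_of_eventually_le {f g : ℝ → ℝ} {f' g' x : ℝ}
    (hf : HasDerivWithinAt f f' (Ioi x) x) (hg : HasDerivWithinAt g g' (Ioi x) x)
    (hfg : f x = g x) (hle : ∀ᶠ y in 𝓝[>] x, f y ≤ g y) : f' ≤ g' := by
  rw [hasDerivWithinAt_iff_tendsto_slope' self_notMem_Ioi] at hf hg
  refine le_of_tendsto_of_tendsto hf hg ?_
  filter_upwards [hle, self_mem_nhdsWithin] with y hy hxy
  rw [slope_def_field, slope_def_field, hfg]
  exact div_le_div_of_nonneg_right (sub_le_sub_right hy _) (sub_pos.2 hxy).le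

theorem IsSigmaConcaveOn.le_mul_cosK_add_mul_sinK {κ r₀ r₁ u' : ℝ} {I : Set ℝ} {u : ℝ → ℝ}
    (hu : IsSigmaConcaveOn κ I u) (h₀ : r₀ ∈ I) (h₁ : r₁ ∈ I) (hlt : r₀ < r₁)
    (hu' : HasDerivWithinAt u u' (Ioi r₀) r₀) :
    u r₁ ≤ u r₀ * cosK κ (r₁ - r₀) + u' * sinK κ (r₁ - r₀) := by
  have hleft : HasDerivAt (fun x => sinK κ (r₁ - x)) (-cosK κ (r₁ - r₀)) r₀ :=
    (hasDerivAt_sinK κ _).comp_const_sub r₁ r₀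
  have hright : HasDerivAt (fun x => sinK κ (x - r₀)) 1 r₀ := by
    simpa only [sub_self, cosK_zero] using (hasDerivAt_sinK κ (r₀ - r₀)).comp_sub_const r₀ r₀
  have hderiv : -cosK κ (r₁ - r₀) * u r₀ + 1 * u r₁ ≤ sinK κ (r₁ - r₀) * u' := by
    refine hasDerivWithinAt_Ioi_le_of_eventually_le
      ((hleft.mul_const (u r₀)).add (hright.mul_const (u r₁))).hasDerivWithinAt
      (hu'.const_mul (sinK κ (r₁ - r₀))) (by simp [sinK_zero]) ?_
    filter_upwards [Ioo_mem_nhdsGT hlt] with x hx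
    exact hu.sinK_interpolation_le h₀ h₁ hlt (Ioo_subset_Icc_self hx)
  linarith

theorem hasRightDerivAt_iff_hasDerivWithinAt {u : ℝ → ℝ} {r L : ℝ} :
    HasRightDerivAt u r L ↔ HasDerivWithinAt u L (Ioi r) r := by
  have hshift : map (r + ·) (𝓝[>] 0) = 𝓝[>] r := by simp
  rw [hasDerivWithinAt_iff_tendsto_slope' self_notMem_Ioi, ← hshift, tendsto_map'_iff]
  simp only [HasRightDerivAt, Function.comp_def, slope_def_field, add_sub_cancel_left]

theorem hasDerivWithinAt_rpow_const_of_log {f : ℝ → ℝ} {s : Set ℝ} {x L : ℝ}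
    (hlog : HasDerivWithinAt (fun y => log (f y)) L s x) (hx : 0 < f x)
    (hs : ∀ᶠ y in 𝓝[s] x, 0 < f y) (p : ℝ) :
    HasDerivWithinAt (fun y => f y ^ p) (f x ^ p * (L * p)) s x := by
  rw [rpow_def_of_pos hx]
  refine (hlog.mul_const p).exp.congr_of_eventuallyEq ?_ (rpow_def_of_pos hx p)
  filter_upwards [hs] with y hy using rpow_def_of_pos hy p

theorem density_jacobian_comparison_general {K N H r₀ r₁ : ℝ} {I : Set ℝ} {h : ℝ → ℝ}
    (hN : 1 < N) (hI : I.OrdConnected) (hpos : ∀ r ∈ I, 0 < h r)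
    (hconc : IsSigmaConcaveOn (K / (N - 1)) I fun r => h r ^ (1 / (N - 1)))
    (h₀ : r₀ ∈ I) (h₁ : r₁ ∈ I) (hlt : r₀ < r₁)
    (hH : HasRightDerivAt (fun r => log (h r)) r₀ H) :
    h r₁ / h r₀ ≤ Jac H K N (r₁ - r₀) := by
  have hpos_right : ∀ᶠ r in 𝓝[>] r₀, 0 < h r := by
    filter_upwards [Ioo_mem_nhdsGT hlt] with r hr
    exact hpos r (hI.out h₀ h₁ (Ioo_subset_Icc_self hr))
  have hderiv := hasDerivWithinAt_rpow_const_of_log (hasRightDerivAt_iff_hasDerivWithinAt.1 hH)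
    (hpos r₀ h₀) hpos_right (1 / (N - 1))
  have hcomp := hconc.le_mul_cosK_add_mul_sinK h₀ h₁ hlt hderiv
  have hratio : (h r₁ / h r₀) ^ (N - 1)⁻¹ ≤
      cosK (K / (N - 1)) (r₁ - r₀) + H / (N - 1) * sinK (K / (N - 1)) (r₁ - r₀) := by
    rw [div_rpow (hpos r₁ h₁).le (hpos r₀ h₀).le, div_le_iff₀' (rpow_pos_of_pos (hpos r₀ h₀) _),
      ← one_div]
    linear_combination hcomp
  exact (rpow_inv_le_iff_of_pos (div_pos (hpos r₁ h₁) (hpos r₀ h₀)).le (le_max_right _ _)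
    (sub_pos.2 hN)).1 (hratio.trans (le_max_left _ _))

/-- Corollary 4.3 / `cor:key`:
if `h : (a,b) → (0,∞)` with `a < 0 < b` is such that `h^{1/(N-1)}` is `σ_{K/(N-1)}`-concave,
and `H = d⁺(log h)(0)`, then `h(r)/h(0) ≤ J_{H,K,N}(r)` for `r ∈ (0,b)`. -/
theorem density_jacobian_comparison (K N a b : ℝ) (hN : 1 < N) (ha : a < 0) (hb : 0 < b)
    (h : ℝ → ℝ) (hpos : ∀ r ∈ Set.Ioo a b, 0 < h r)
    (hconc : IsSigmaConcaveOn (K / (N - 1)) (Set.Ioo a b)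
      (fun r => h r ^ ((1 : ℝ) / (N - 1))))
    (H : ℝ) (hH : HasRightDerivAt (fun r => Real.log (h r)) 0 H)
    (r : ℝ) (hr : r ∈ Set.Ioo 0 b) :
    h r / h 0 ≤ Jac H K N r := by
  simpa only [sub_zero] using density_jacobian_comparison_general hN ordConnected_Ioo hpos hconc
    ⟨ha, hb⟩ ⟨ha.trans hr.1, hr.2⟩ hr.1 hH
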